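/- Let G be a finite connected simple graph, let e = (u,v) be an edge of G with d_G(u) ≥ 2 and d_G(v) ≥ 2, and for an integer k ≥ 0 let G^{(k)} denote the graph obtained from G by subdividing the edge e exactly 2k+1 times. Then for every integer s ≥ 1, the number of perfect matchings of the line graph L(G^{(1)}) equals the number of perfect matchings of the line graph L(G^{(s)}); that is, subdividing e once and subdividing e any odd number of times yield line graphs with equally many perfect matchings. -/

import Mathlib

/-!
Subdividing the edge `(u, v)` exactly `n ≥ 1` times turns it into a path of `n + 1` edges. Hence the
line graph of the subdivided graph is the line graph of `G - (u, v)` with a path on `n + 1` vertices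
attached, whose first vertex is joined to the edges at `u` and whose last vertex is joined to the
edges at `v` (`numPM_lineGraph_subdivideEdge`).

When `n = 2 * s + 1`, the attached path `0, …, 2 * s + 1` has an even number of vertices, and its
inner vertices have degree two. A perfect matching therefore alternates along the path: either it
pairs `0 ↔ 1, 2 ↔ 3, …`, or it pairs `1 ↔ 2, 3 ↔ 4, …` and matches both ends outside the path
(`PartnerMap.dichotomy`). In both cases it is determined by its trace on the two ends and the rest
of the graph, that is, by a perfect matching of the graph with a path on just two vertices attached
(`card_partnerMap_attachPath`). The latter does not depend on `s`.
-/

open SimpleGraph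

/-- The number of perfect matchings of a simple graph `G`. -/
noncomputable def numPM {V : Type*} (G : SimpleGraph V) : ℕ :=
  Set.ncard {M : G.Subgraph | M.IsPerfectMatching}

/-- The graph obtained from `G` by subdividing the edge `(u,v)` exactly `k` times, i.e.
replacing the edge `(u,v)` by a path `u — w₀ — w₁ — ⋯ — w_{k-1} — v` through `k` new
vertices.  (For `k = 0` this is `G` itself.) -/
def subdivideEdge {V : Type*} (G : SimpleGraph V) (u v : V) (k : ℕ) :
    SimpleGraph (V ⊕ Fin k) :=
  SimpleGraph.fromRel (fun a b =>
    (∃ x y : V, a = Sum.inl x ∧ b = Sum.inl y ∧ G.Adj x y ∧ (s(x, y) ≠ s(u, v) ∨ k = 0)) ∨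
    (∃ i : Fin k, a = Sum.inl u ∧ b = Sum.inr i ∧ (i : ℕ) = 0) ∨
    (∃ i : Fin k, a = Sum.inl v ∧ b = Sum.inr i ∧ (i : ℕ) = k - 1) ∨
    (∃ i j : Fin k, a = Sum.inr i ∧ b = Sum.inr j ∧ (j : ℕ) = (i : ℕ) + 1))

/-! ### Perfect matchings as partner maps -/

/-- A perfect matching of a relation `R` (the adjacency of a simple graph in the applications),
encoded as the map sending each vertex to its partner. -/
def PartnerMap {W : Type*} (R : W → W → Prop) : Type _ :=
  {f : W → W // ∀ x, R x (f x) ∧ f (f x) = x}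

theorem numPM_eq_card_partnerMap {W : Type*} (H : SimpleGraph W) :
    numPM H = Nat.card (PartnerMap H.Adj) := by
  classical
  unfold numPM
  rw [← Nat.card_coe_set_eq]
  symm
  let F : PartnerMap H.Adj → {M : H.Subgraph | M.IsPerfectMatching} := fun f =>
    ⟨{ verts := Set.univ
       Adj := fun x y => f.1 x = y
       adj_sub := by
        rintro x y rfl
        exact (f.2 x).1
       edge_vert := fun _ => Set.mem_univ _
       symm := ⟨by
        rintro x y rfl
        exact (f.2 x).2⟩ }, by
      refine ⟨fun x _ => ⟨f.1 x, rfl, fun y (hy : f.1 x = y) => hy.symm⟩, fun x => Set.mem_univ x⟩⟩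
  refine Nat.card_congr (Equiv.ofBijective F ⟨?_, ?_⟩)
  · intro f g h
    apply Subtype.ext
    funext x
    have h1 : (F f).1.Adj x (g.1 x) := by rw [h]
    exact h1
  · rintro ⟨M, hM⟩
    have hM' := SimpleGraph.Subgraph.isPerfectMatching_iff.1 hM
    choose f hf hf' using hM'
    refine ⟨⟨f, fun x => ⟨M.adj_sub (hf x), (hf' _ _ (hf x).symm).symm⟩⟩, ?_⟩
    apply Subtype.ext
    apply SimpleGraph.Subgraph.ext
    · exact (Set.eq_univ_of_forall hM.2).symm
    · funext x y
      refine propext ⟨?_, fun h => (hf' _ _ h).symm⟩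
      rintro rfl
      exact hf x

theorem card_partnerMap_congr {W W' : Type*} {R : W → W → Prop} {R' : W' → W' → Prop}
    (φ : W ≃ W') (h : ∀ x y, R' (φ x) (φ y) ↔ R x y) :
    Nat.card (PartnerMap R) = Nat.card (PartnerMap R') := by
  refine Nat.card_congr
    { toFun := fun f => ⟨fun y => φ (f.1 (φ.symm y)), fun y => ⟨?_, ?_⟩⟩
      invFun := fun g => ⟨fun x => φ.symm (g.1 (φ x)), fun x => ⟨?_, ?_⟩⟩
      left_inv := fun f => Subtype.ext (by funext x; simp)
      right_inv := fun f => Subtype.ext (by funext x; simp) }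
  · have := (h _ _).2 (f.2 (φ.symm y)).1
    simpa using this
  · simp [(f.2 _).2]
  · rw [← h]
    simpa using (g.2 (φ x)).1
  · simp [(g.2 _).2]

/-! ### Attaching a path -/

/-- The relation `R` on `E` with a path on `m` new vertices `0, …, m - 1` attached: the first
vertex of the path is joined to the `P`-vertices and the last one to the `Q`-vertices. -/
def attachPath {E : Type*} (R : E → E → Prop) (P Q : E → Prop) (m : ℕ) :
    E ⊕ Fin m → E ⊕ Fin m → Prop
  | .inl e, .inl e' => R e e'
  | .inl e, .inr i => ((i : ℕ) = 0 ∧ P e) ∨ ((i : ℕ) + 1 = m ∧ Q e)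
  | .inr i, .inl e => ((i : ℕ) = 0 ∧ P e) ∨ ((i : ℕ) + 1 = m ∧ Q e)
  | .inr i, .inr j => (i : ℕ) + 1 = j ∨ (j : ℕ) + 1 = i

section Path

variable {E : Type*} {R : E → E → Prop} {P Q : E → Prop} {s : ℕ}

/-- The two ends of the path on `2 * s + 2` vertices. -/
def pathEnd (s : ℕ) (j : Fin 2) : Fin (2 * s + 2) :=
  ⟨if (j : ℕ) = 0 then 0 else 2 * s + 1, by split <;> omega⟩

/-- A left inverse of `pathEnd`; its value at inner vertices is immaterial. -/
def whichEnd (s : ℕ) (i : Fin (2 * s + 2)) : Fin 2 :=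
  if (i : ℕ) = 0 then 0 else 1

/-- The pairing `0 ↔ 1, 2 ↔ 3, …` of all the path vertices. -/
def pairAll (s : ℕ) (i : Fin (2 * s + 2)) : Fin (2 * s + 2) :=
  ⟨if (i : ℕ) % 2 = 0 then i + 1 else i - 1, by split <;> omega⟩

/-- The pairing `1 ↔ 2, 3 ↔ 4, …` of the inner path vertices; its values at the two ends are
immaterial. -/
def pairInner (s : ℕ) (i : Fin (2 * s + 2)) : Fin (2 * s + 2) :=
  ⟨if (i : ℕ) % 2 = 0 then i - 1 else min (i + 1) (2 * s + 1), by split <;> omega⟩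

/-- If the first path vertex is matched inside the path, then the whole path is matched as
`0 ↔ 1, 2 ↔ 3, …`. -/
theorem PartnerMap.eq_pairAll (f : PartnerMap (attachPath R P Q (2 * s + 2)))
    {j : Fin (2 * s + 2)} (h0 : f.1 (.inr ⟨0, by omega⟩) = .inr j) (i : Fin (2 * s + 2)) :
    f.1 (.inr i) = .inr (pairAll s i) := by
  obtain ⟨f, hf⟩ := f
  dsimp only at h0 ⊢
  have key : ∀ k (hk : k ≤ s),
      f (.inr ⟨2 * k, by omega⟩) = .inr ⟨2 * k + 1, by omega⟩ := by
    intro k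
    induction k with
    | zero =>
      intro hk
      have h1 := (hf (.inr ⟨0, by omega⟩)).1
      rw [h0] at h1
      simp only [attachPath] at h1
      simp only [Nat.mul_zero, h0, Sum.inr.injEq, Fin.ext_iff]
      omega
    | succ k ih =>
      intro hk
      have ih := ih (by omega)
      have h1 := hf (.inr ⟨2 * (k + 1), by omega⟩)
      have h2 := (hf (.inr ⟨2 * k, by omega⟩)).2
      rw [ih] at h2
      cases h : f (.inr ⟨2 * (k + 1), by omega⟩) with
      | inl e =>
        rw [h] at h1
        simp only [attachPath] at h1
        omega
      | inr l =>
        rw [h] at h1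
        simp only [attachPath] at h1
        obtain ⟨h3 | h3, h4⟩ := h1
        · simp only [Sum.inr.injEq, Fin.ext_iff]
          omega
        · have : l = ⟨2 * k + 1, by omega⟩ := by ext; simp; omega
          rw [this, h2] at h4
          simp at h4
  obtain ⟨k, hk | hk⟩ := Nat.even_or_odd' (i : ℕ)
  · have h1 := key k (by omega)
    have h2 : i = ⟨2 * k, by omega⟩ := by ext; exact hk
    rw [h2, h1]
    simp [pairAll]
  · have h1 := (hf (.inr ⟨2 * k, by omega⟩)).2
    rw [key k (by omega)] at h1
    have h2 : i = ⟨2 * k + 1, by omega⟩ := by ext; exact hk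
    rw [h2, h1]
    simp [pairAll]

/-- If the first path vertex is matched outside the path, then the inner path vertices are matched
as `1 ↔ 2, 3 ↔ 4, …`. -/
theorem PartnerMap.eq_pairInner (f : PartnerMap (attachPath R P Q (2 * s + 2)))
    {e : E} (h0 : f.1 (.inr ⟨0, by omega⟩) = .inl e) (i : Fin (2 * s + 2))
    (hi0 : (i : ℕ) ≠ 0) (hi1 : (i : ℕ) ≠ 2 * s + 1) :
    f.1 (.inr i) = .inr (pairInner s i) := by
  obtain ⟨f, hf⟩ := f
  dsimp only at h0 ⊢
  have key : ∀ k (hk : k < s),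
      f (.inr ⟨2 * k + 1, by omega⟩) = .inr ⟨2 * k + 2, by omega⟩ := by
    intro k
    induction k with
    | zero =>
      intro hk
      have h1 := hf (.inr ⟨1, by omega⟩)
      simp only [Nat.mul_zero, Nat.zero_add]
      cases h : f (.inr ⟨1, by omega⟩) with
      | inl e =>
        rw [h] at h1
        simp only [attachPath] at h1
        omega
      | inr l =>
        rw [h] at h1
        simp only [attachPath] at h1
        obtain ⟨h3 | h3, h4⟩ := h1
        · simp only [Sum.inr.injEq, Fin.ext_iff]
          omega
        · change (l : ℕ) + 1 = 1 at h3
          have : l = ⟨0, by omega⟩ := Fin.ext (Nat.succ.inj h3)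
          rw [this, h0] at h4
          simp at h4
    | succ k ih =>
      intro hk
      have ih := ih (by omega)
      have h1 := hf (.inr ⟨2 * (k + 1) + 1, by omega⟩)
      have h2 := (hf (.inr ⟨2 * k + 1, by omega⟩)).2
      rw [ih] at h2
      cases h : f (.inr ⟨2 * (k + 1) + 1, by omega⟩) with
      | inl e =>
        rw [h] at h1
        simp only [attachPath] at h1
        omega
      | inr l =>
        rw [h] at h1
        simp only [attachPath] at h1
        obtain ⟨h3 | h3, h4⟩ := h1
        · simp only [Sum.inr.injEq, Fin.ext_iff]
          omega
        · have : l = ⟨2 * k + 2, by omega⟩ := by ext; simp; omega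
          rw [this, h2] at h4
          simp at h4
  obtain ⟨k, hk | hk⟩ := Nat.even_or_odd' (i : ℕ)
  · obtain ⟨k, rfl⟩ : ∃ l, k = l + 1 := ⟨k - 1, by omega⟩
    have h1 := (hf (.inr ⟨2 * k + 1, by omega⟩)).2
    rw [key k (by omega)] at h1
    have h2 : i = ⟨2 * k + 2, by omega⟩ := by ext; exact hk
    rw [h2, h1]
    simp [pairInner]
  · have h1 := key k (by omega)
    have h2 : i = ⟨2 * k + 1, by omega⟩ := by ext; exact hk
    rw [h2, h1]
    simp [pairInner]; omega

/-- If the first path vertex is matched outside the path, so is the last one: its only neighbour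
inside the path is already taken. -/
theorem PartnerMap.exists_inl_last (f : PartnerMap (attachPath R P Q (2 * s + 2)))
    {e : E} (h0 : f.1 (.inr ⟨0, by omega⟩) = .inl e) :
    ∃ e', f.1 (.inr ⟨2 * s + 1, by omega⟩) = .inl e' := by
  cases h : f.1 (.inr ⟨2 * s + 1, by omega⟩) with
  | inl e' => exact ⟨e', rfl⟩
  | inr l =>
    exfalso
    have h1 := f.2 (.inr ⟨2 * s + 1, by omega⟩)
    rw [h] at h1
    simp only [attachPath] at h1
    have hl : (l : ℕ) = 2 * s := by omega
    obtain rfl | hs := Nat.eq_zero_or_pos s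
    · have : l = ⟨0, by omega⟩ := by ext; exact hl
      rw [this, h0] at h1
      simp at h1
    · rw [f.eq_pairInner h0 l (by omega) (by omega)] at h1
      simp [pairInner, hl, Fin.ext_iff] at h1

/-- A perfect matching restricted to the path is one of the two alternating pairings; in the
second one both ends are matched outside the path. -/
theorem PartnerMap.dichotomy (f : PartnerMap (attachPath R P Q (2 * s + 2))) :
    (∀ i, f.1 (.inr i) = .inr (pairAll s i)) ∨
    ((∃ e, f.1 (.inr (pathEnd s 0)) = .inl e) ∧ (∃ e, f.1 (.inr (pathEnd s 1)) = .inl e) ∧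
      ∀ i : Fin (2 * s + 2), (i : ℕ) ≠ 0 → (i : ℕ) ≠ 2 * s + 1 →
        f.1 (.inr i) = .inr (pairInner s i)) := by
  cases h0 : f.1 (.inr ⟨0, by omega⟩) with
  | inl e => exact Or.inr ⟨⟨e, h0⟩, f.exists_inl_last h0, f.eq_pairInner h0⟩
  | inr j => exact Or.inl (f.eq_pairAll h0)

theorem PartnerMap.dichotomy_two (g : PartnerMap (attachPath R P Q 2)) :
    (g.1 (.inr 0) = .inr 1 ∧ g.1 (.inr 1) = .inr 0) ∨
    ((∃ e, g.1 (.inr 0) = .inl e) ∧ (∃ e, g.1 (.inr 1) = .inl e)) := by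
  rcases PartnerMap.dichotomy (s := 0) g with h | ⟨h, h', -⟩
  · exact Or.inl ⟨h 0, h 1⟩
  · exact Or.inr ⟨h, h'⟩

/-- The trace of a matching `f` on the path contracted to its two ends: an end that `f` matches inside
the path becomes matched to the other end. -/
def contractFun (s : ℕ) (f : E ⊕ Fin (2 * s + 2) → E ⊕ Fin (2 * s + 2)) :
    E ⊕ Fin 2 → E ⊕ Fin 2
  | .inl e => Sum.map id (whichEnd s) (f (.inl e))
  | .inr j => Sum.elim Sum.inl (fun _ => Sum.inr (1 - j)) (f (.inr (pathEnd s j)))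

open Classical in
/-- The extension of a matching `g` of the graph with a two-vertex path to the whole path: the inner
vertices are paired as `g` dictates at the ends. -/
noncomputable def expandFun (s : ℕ) (g : E ⊕ Fin 2 → E ⊕ Fin 2) :
    E ⊕ Fin (2 * s + 2) → E ⊕ Fin (2 * s + 2)
  | .inl e => Sum.map id (pathEnd s) (g (.inl e))
  | .inr i =>
    if g (.inr 0) = .inr 1 then .inr (pairAll s i)
    else if (i : ℕ) = 0 ∨ (i : ℕ) = 2 * s + 1 then
      Sum.map id (pathEnd s) (g (.inr (whichEnd s i)))
    else .inr (pairInner s i)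

theorem whichEnd_pathEnd (j : Fin 2) : whichEnd s (pathEnd s j) = j := by
  fin_cases j <;> simp [whichEnd, pathEnd]

theorem pathEnd_whichEnd {i : Fin (2 * s + 2)} (hi : (i : ℕ) = 0 ∨ (i : ℕ) = 2 * s + 1) :
    pathEnd s (whichEnd s i) = i := by
  ext
  rcases hi with hi | hi <;> simp [whichEnd, pathEnd, hi]

theorem pathEnd_eq (j : Fin 2) :
    ((pathEnd s j : Fin (2 * s + 2)) : ℕ) = 0 ∨ (pathEnd s j : ℕ) = 2 * s + 1 := by
  fin_cases j <;> simp [pathEnd]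

theorem attachPath_pathEnd_iff (e : E) (j : Fin 2) :
    attachPath R P Q (2 * s + 2) (.inl e) (.inr (pathEnd s j)) ↔
      attachPath R P Q 2 (.inl e) (.inr j) := by
  fin_cases j <;> simp [attachPath, pathEnd]

theorem attachPath_comm {m : ℕ} (e : E) (i : Fin m) :
    attachPath R P Q m (.inr i) (.inl e) ↔ attachPath R P Q m (.inl e) (.inr i) := Iff.rfl

theorem eq_zero_or_of_attachPath {e : E} {i : Fin (2 * s + 2)}
    (h : attachPath R P Q (2 * s + 2) (.inl e) (.inr i)) :
    (i : ℕ) = 0 ∨ (i : ℕ) = 2 * s + 1 := by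
  simp only [attachPath] at h
  omega

theorem contractFun_spec (f : PartnerMap (attachPath R P Q (2 * s + 2))) (x : E ⊕ Fin 2) :
    attachPath R P Q 2 x (contractFun s f.1 x) ∧ contractFun s f.1 (contractFun s f.1 x) = x := by
  cases x with
  | inl e =>
    have h1 := f.2 (.inl e)
    cases h : f.1 (.inl e) with
    | inl e' =>
      rw [h] at h1
      simpa [contractFun, h, h1.2, attachPath] using h1.1
    | inr i =>
      rw [h] at h1
      have hi := pathEnd_whichEnd (eq_zero_or_of_attachPath h1.1)
      have h2 := h1.1
      rw [← hi, attachPath_pathEnd_iff] at h2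
      simpa [contractFun, h, hi, h1.2] using h2
  | inr j =>
    have h1 := f.2 (.inr (pathEnd s j))
    cases h : f.1 (.inr (pathEnd s j)) with
    | inl e =>
      rw [h, attachPath_comm, attachPath_pathEnd_iff, ← attachPath_comm] at h1
      simpa [contractFun, h, h1.2, whichEnd_pathEnd] using h1.1
    | inr l =>
      rcases f.dichotomy with h2 | ⟨⟨e, h2⟩, ⟨e', h3⟩, -⟩
      · fin_cases j <;> simp [contractFun, h2, attachPath]
      · exfalso
        fin_cases j <;> simp_all

theorem pairAll_spec (i : Fin (2 * s + 2)) :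
    attachPath R P Q (2 * s + 2) (.inr i) (.inr (pairAll s i)) ∧ pairAll s (pairAll s i) = i := by
  obtain ⟨i, hi⟩ := i
  simp only [attachPath, pairAll, Fin.ext_iff]
  grind

theorem pairInner_spec (i : Fin (2 * s + 2)) (hi0 : (i : ℕ) ≠ 0) (hi1 : (i : ℕ) ≠ 2 * s + 1) :
    attachPath R P Q (2 * s + 2) (.inr i) (.inr (pairInner s i)) ∧
      ((pairInner s i : Fin _) : ℕ) ≠ 0 ∧ (pairInner s i : ℕ) ≠ 2 * s + 1 ∧
      pairInner s (pairInner s i) = i := by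
  obtain ⟨i, hi⟩ := i
  simp only [attachPath, pairInner, Fin.ext_iff]
  grind

theorem expandFun_spec (g : PartnerMap (attachPath R P Q 2)) (x : E ⊕ Fin (2 * s + 2)) :
    attachPath R P Q (2 * s + 2) x (expandFun s g.1 x) ∧
      expandFun s g.1 (expandFun s g.1 x) = x := by
  cases x with
  | inl e =>
    have h1 := g.2 (.inl e)
    cases h : g.1 (.inl e) with
    | inl e' =>
      rw [h] at h1
      simpa [expandFun, h, h1.2, attachPath] using h1.1
    | inr j =>
      rw [h] at h1
      have h3 : g.1 (.inr 0) ≠ .inr 1 := by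
        rcases g.dichotomy_two with h2 | ⟨⟨e, h2⟩, -⟩
        · fin_cases j <;> simp_all
        · simp [h2]
      have h4 := (attachPath_pathEnd_iff (s := s) e j).2 h1.1
      simpa [-Fin.val_eq_zero_iff, expandFun, h, h3, h1.2, pathEnd_eq, whichEnd_pathEnd] using h4
  | inr i =>
    by_cases h3 : g.1 (.inr 0) = .inr 1
    · have := pairAll_spec (R := R) (P := P) (Q := Q) i
      simpa [expandFun, h3, this.2] using this.1
    · by_cases hi : (i : ℕ) = 0 ∨ (i : ℕ) = 2 * s + 1
      · obtain ⟨e, he⟩ : ∃ e, g.1 (.inr (whichEnd s i)) = .inl e := by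
          rcases g.dichotomy_two with h2 | ⟨h2, h2'⟩
          · exact absurd h2.1 h3
          · unfold whichEnd
            split
            · exact h2
            · exact h2'
        have h1 := g.2 (.inr (whichEnd s i))
        rw [he, attachPath_comm, ← attachPath_pathEnd_iff (s := s), ← attachPath_comm,
          pathEnd_whichEnd hi] at h1
        simpa [-Fin.val_eq_zero_iff, expandFun, h3, hi, he, h1.2, pathEnd_whichEnd] using h1.1
      · have := pairInner_spec (R := R) (P := P) (Q := Q) i (by omega) (by omega)
        simpa [-Fin.val_eq_zero_iff, expandFun, h3, hi, this.2] using this.1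

/-- Perfect matchings do not see the length of an attached path with an even number of vertices. -/
theorem card_partnerMap_attachPath (R : E → E → Prop) (P Q : E → Prop) (s : ℕ) :
    Nat.card (PartnerMap (attachPath R P Q (2 * s + 2))) =
      Nat.card (PartnerMap (attachPath R P Q 2)) := by
  refine Nat.card_congr
    { toFun := fun f => ⟨contractFun s f.1, contractFun_spec f⟩
      invFun := fun g => ⟨expandFun s g.1, expandFun_spec g⟩
      left_inv := fun f => Subtype.ext (funext fun x => ?_)
      right_inv := fun g => Subtype.ext (funext fun x => ?_) }
  · cases x with
    | inl e =>
      have h1 := f.2 (.inl e)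
      cases h : f.1 (.inl e) with
      | inl e' => simp [expandFun, contractFun, h]
      | inr i =>
        rw [h] at h1
        simp [expandFun, contractFun, h, pathEnd_whichEnd (eq_zero_or_of_attachPath h1.1)]
    | inr i =>
      rcases f.dichotomy with h2 | ⟨⟨e, h2⟩, ⟨e', h3⟩, h4⟩
      · simp [expandFun, contractFun, h2]
      · by_cases hi : (i : ℕ) = 0 ∨ (i : ℕ) = 2 * s + 1
        · have hi' := pathEnd_whichEnd hi
          obtain ⟨e'', he⟩ : ∃ e, f.1 (.inr i) = .inl e := by
            rw [← hi']
            unfold whichEnd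
            split
            · exact ⟨e, h2⟩
            · exact ⟨e', h3⟩
          simp [-Fin.val_eq_zero_iff, expandFun, contractFun, h2, hi, hi', he]
        · simp [-Fin.val_eq_zero_iff, expandFun, contractFun, h2, hi, h4 i (by omega) (by omega)]
  · cases x with
    | inl e =>
      have h1 := g.2 (.inl e)
      cases h : g.1 (.inl e) with
      | inl e' => simp [expandFun, contractFun, h]
      | inr j => simp [expandFun, contractFun, h, whichEnd_pathEnd]
    | inr j =>
      rcases g.dichotomy_two with ⟨h2, h3⟩ | ⟨⟨e, h2⟩, ⟨e', h3⟩⟩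
      · fin_cases j <;> simp [expandFun, contractFun, h2, h3]
      · fin_cases j <;>
          simp [-Fin.val_eq_zero_iff, expandFun, contractFun, h2, h3, pathEnd_eq, whichEnd_pathEnd]

end Path

/-! ### Line graphs of subdivisions -/

section Subdivide

variable {V : Type*}

/-- The vertices `u = p 0, p 1, …, p (n + 1) = v` of the path replacing the edge `(u, v)` when it is
subdivided `n` times. -/
def pathVertex (u v : V) (n j : ℕ) : V ⊕ Fin n :=
  if j = 0 then .inl u else if h : j - 1 < n then .inr ⟨j - 1, h⟩ else .inl v

theorem pathVertex_inj {u v : V} (huv : u ≠ v) {n i j : ℕ} (hi : i ≤ n + 1) (hj : j ≤ n + 1) :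
    pathVertex u v n i = pathVertex u v n j ↔ i = j := by
  unfold pathVertex
  grind

theorem pathVertex_eq_inl {u v x : V} {n i : ℕ} (hi : i ≤ n + 1) :
    pathVertex u v n i = .inl x ↔ (i = 0 ∧ u = x) ∨ (i = n + 1 ∧ v = x) := by
  unfold pathVertex
  grind

/-- The edges of `G` other than `(u, v)`. -/
abbrev OtherEdge (G : SimpleGraph V) (u v : V) : Type _ :=
  {e : Sym2 V // e ∈ G.edgeSet ∧ e ≠ s(u, v)}

/-- The edges of the subdivided graph: edges of `G` other than `(u, v)`, and the path edges. -/
def subdivEdge (G : SimpleGraph V) (u v : V) (n : ℕ) :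
    OtherEdge G u v ⊕ Fin (n + 1) → Sym2 (V ⊕ Fin n)
  | .inl e => Sym2.map Sum.inl e.1
  | .inr i => s(pathVertex u v n i, pathVertex u v n (i + 1))

variable {G : SimpleGraph V} {u v : V} {n : ℕ}

theorem subdivEdge_mem (hn : n ≠ 0) (huv : u ≠ v) (x : OtherEdge G u v ⊕ Fin (n + 1)) :
    subdivEdge G u v n x ∈ (subdivideEdge G u v n).edgeSet := by
  cases x with
  | inl e =>
    obtain ⟨e, he, he'⟩ := e
    induction e using Sym2.ind with
    | _ a b =>
      have hab : G.Adj a b := he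
      simp only [subdivEdge, Sym2.map_mk, SimpleGraph.mem_edgeSet, subdivideEdge,
        SimpleGraph.fromRel_adj]
      exact ⟨by simpa using hab.ne, Or.inl (Or.inl ⟨a, b, rfl, rfl, hab, Or.inl he'⟩)⟩
  | inr i =>
    obtain ⟨i, hi⟩ := i
    simp only [subdivEdge, SimpleGraph.mem_edgeSet, subdivideEdge, SimpleGraph.fromRel_adj]
    refine ⟨fun h => ?_, ?_⟩
    · rw [pathVertex_inj huv (by omega) (by omega)] at h
      omega
    · obtain rfl | h0 := Nat.eq_zero_or_pos i
      · exact Or.inl (Or.inr (Or.inl ⟨⟨0, by omega⟩, by simp [pathVertex],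
          by simp [pathVertex, Nat.pos_of_ne_zero hn], rfl⟩))
      · obtain rfl | h1 := Nat.eq_or_lt_of_le (Nat.le_of_lt_succ hi)
        · exact Or.inr (Or.inr (Or.inr (Or.inl ⟨⟨i - 1, by omega⟩, by simp [pathVertex],
            by simp [pathVertex, hn, Nat.pos_of_ne_zero hn], rfl⟩)))
        · exact Or.inl (Or.inr (Or.inr (Or.inr ⟨⟨i - 1, by omega⟩, ⟨i, h1⟩,
            by simp [pathVertex, h0.ne', show i - 1 < n by omega], by simp [pathVertex, h1],
            by simp only; omega⟩)))

theorem exists_subdivEdge (hn : n ≠ 0) {e : Sym2 (V ⊕ Fin n)}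
    (he : e ∈ (subdivideEdge G u v n).edgeSet) : ∃ x, subdivEdge G u v n x = e := by
  have key : ∀ a b : V ⊕ Fin n,
      ((∃ x y : V, a = Sum.inl x ∧ b = Sum.inl y ∧ G.Adj x y ∧ (s(x, y) ≠ s(u, v) ∨ n = 0)) ∨
      (∃ i : Fin n, a = Sum.inl u ∧ b = Sum.inr i ∧ (i : ℕ) = 0) ∨
      (∃ i : Fin n, a = Sum.inl v ∧ b = Sum.inr i ∧ (i : ℕ) = n - 1) ∨
      (∃ i j : Fin n, a = Sum.inr i ∧ b = Sum.inr j ∧ (j : ℕ) = (i : ℕ) + 1)) →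
      ∃ x, subdivEdge G u v n x = s(a, b) := by
    rintro a b (⟨x, y, rfl, rfl, hxy, h⟩ | ⟨⟨i, hi⟩, rfl, rfl, h⟩ | ⟨⟨i, hi⟩, rfl, rfl, h⟩ |
      ⟨⟨i, hi⟩, ⟨j, hj⟩, rfl, rfl, h⟩)
    · exact ⟨.inl ⟨s(x, y), hxy, h.resolve_right hn⟩, rfl⟩
    · simp only at h
      subst h
      exact ⟨.inr ⟨0, by omega⟩, by simp [subdivEdge, pathVertex, hi]⟩
    · simp only at h
      subst h
      refine ⟨.inr ⟨n, by omega⟩, ?_⟩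
      rw [Sym2.eq_swap]
      simp [subdivEdge, pathVertex, hn, hi]
    · simp only at h
      subst h
      exact ⟨.inr ⟨i + 1, by omega⟩, by simp [subdivEdge, pathVertex, hi, hj]⟩
  induction e using Sym2.ind with
  | _ a b =>
    simp only [SimpleGraph.mem_edgeSet, subdivideEdge, SimpleGraph.fromRel_adj] at he
    rcases he.2 with h | h
    · exact key a b h
    · rw [Sym2.eq_swap]
      exact key b a h

theorem subdivEdge_injective (hn : n ≠ 0) (huv : u ≠ v) :
    Function.Injective (subdivEdge G u v n) := by
  have key : ∀ (e : OtherEdge G u v) (i : Fin (n + 1)),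
      subdivEdge G u v n (.inl e) ≠ subdivEdge G u v n (.inr i) := by
    intro e i h
    have h1 : pathVertex u v n i ∈ subdivEdge G u v n (.inl e) := by
      rw [h]; exact Sym2.mem_mk_left _ _
    have h2 : pathVertex u v n (i + 1) ∈ subdivEdge G u v n (.inl e) := by
      rw [h]; exact Sym2.mem_mk_right _ _
    obtain ⟨x, -, hx⟩ := Sym2.mem_map.1 h1
    obtain ⟨y, -, hy⟩ := Sym2.mem_map.1 h2
    have hx := (pathVertex_eq_inl (by omega)).1 hx.symm
    have hy := (pathVertex_eq_inl (by omega)).1 hy.symm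
    omega
  rintro (e | i) (e' | j) h
  · have h : Sym2.map Sum.inl e.1 = Sym2.map Sum.inl e'.1 := h
    exact congrArg _ (Subtype.ext (Sym2.map.injective Sum.inl_injective h))
  · exact absurd h (key _ _)
  · exact absurd h.symm (key _ _)
  · simp only [subdivEdge, Sym2.eq_iff] at h
    rw [pathVertex_inj huv (by omega) (by omega), pathVertex_inj huv (by omega) (by omega),
      pathVertex_inj huv (by omega) (by omega), pathVertex_inj huv (by omega) (by omega)] at h
    exact congrArg _ (Fin.ext (by omega))

/-- Incidence of path edges: they share a vertex with an old edge only at `u` or `v`, and with each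
other only when consecutive. -/
theorem subdivEdge_adj_iff (huv : u ≠ v) (x y : OtherEdge G u v ⊕ Fin (n + 1)) :
    (x ≠ y ∧ ∃ a, a ∈ subdivEdge G u v n x ∧ a ∈ subdivEdge G u v n y) ↔
      attachPath (fun e e' : OtherEdge G u v => e ≠ e' ∧ ∃ a, a ∈ e.1 ∧ a ∈ e'.1)
        (fun e => u ∈ e.1) (fun e => v ∈ e.1) (n + 1) x y := by
  have key : ∀ (e : OtherEdge G u v) (i : Fin (n + 1)),
      (∃ a, a ∈ subdivEdge G u v n (.inl e) ∧ a ∈ subdivEdge G u v n (.inr i)) ↔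
        ((i : ℕ) = 0 ∧ u ∈ e.1) ∨ ((i : ℕ) + 1 = n + 1 ∧ v ∈ e.1) := by
    intro e i
    simp only [subdivEdge, Sym2.mem_map, Sym2.mem_iff]
    constructor
    · rintro ⟨_, ⟨x, hx, rfl⟩, h | h⟩
      · rcases (pathVertex_eq_inl (by omega)).1 h.symm with ⟨h1, rfl⟩ | ⟨h1, rfl⟩
        · exact Or.inl ⟨h1, hx⟩
        · omega
      · rcases (pathVertex_eq_inl (by omega)).1 h.symm with ⟨h1, rfl⟩ | ⟨h1, rfl⟩
        · omega
        · exact Or.inr ⟨h1, hx⟩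
    · rintro (⟨h1, hx⟩ | ⟨h1, hx⟩)
      · exact ⟨_, ⟨u, hx, rfl⟩, Or.inl ((pathVertex_eq_inl (by omega)).2 (Or.inl ⟨h1, rfl⟩)).symm⟩
      · exact ⟨_, ⟨v, hx, rfl⟩, Or.inr ((pathVertex_eq_inl (by omega)).2 (Or.inr ⟨h1, rfl⟩)).symm⟩
  rcases x with e | i <;> rcases y with e' | j
  · simp [attachPath, subdivEdge, Sym2.mem_map]
  · simpa [attachPath] using key e j
  · simp only [attachPath, ← key e' i]
    simp [and_comm]
  · simp only [attachPath, subdivEdge, Sym2.mem_iff, ne_eq, Sum.inr.injEq, Fin.ext_iff]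
    constructor
    · rintro ⟨hij, a, rfl | rfl, h | h⟩ <;>
      · rw [pathVertex_inj huv (by omega) (by omega)] at h
        omega
    · rintro (h | h)
      · exact ⟨by omega, _, Or.inr rfl, Or.inl (by rw [h])⟩
      · exact ⟨by omega, _, Or.inl rfl, Or.inr (by rw [h])⟩

/-- The line graph of the graph with `(u, v)` subdivided `n` times arises from the line graph of
`G - (u, v)` by attaching a path on `n + 1` vertices. -/
theorem numPM_lineGraph_subdivideEdge (hn : n ≠ 0) (huv : u ≠ v) :
    numPM (subdivideEdge G u v n).lineGraph =
      Nat.card (PartnerMap (attachPath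
        (fun e e' : OtherEdge G u v => e ≠ e' ∧ ∃ a, a ∈ e.1 ∧ a ∈ e'.1)
        (fun e => u ∈ e.1) (fun e => v ∈ e.1) (n + 1))) := by
  rw [numPM_eq_card_partnerMap]
  symm
  let φ : OtherEdge G u v ⊕ Fin (n + 1) → (subdivideEdge G u v n).edgeSet :=
    fun x => ⟨subdivEdge G u v n x, subdivEdge_mem hn huv x⟩
  have hφ : Function.Injective φ := fun x y h =>
    subdivEdge_injective hn huv (congrArg Subtype.val h)
  have hφ' : Function.Surjective φ := by
    rintro ⟨e, he⟩
    obtain ⟨x, hx⟩ := exists_subdivEdge hn he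
    exact ⟨x, Subtype.ext hx⟩
  refine card_partnerMap_congr (Equiv.ofBijective φ ⟨hφ, hφ'⟩) fun x y => ?_
  rw [← subdivEdge_adj_iff huv, SimpleGraph.lineGraph_adj_iff_exists]
  exact and_congr_left' hφ.ne_iff

end Subdivide

/-- Let `G` be a finite connected simple graph, let `(u,v)` be an edge of `G` with both
endpoints of degree at least 2, and for `k ≥ 0` let `G^{(k)}` be the graph obtained from `G`
by subdividing the edge `(u,v)` exactly `2k + 1` times.  Then for every `s ≥ 1`, the line
graphs `L(G^{(1)})` and `L(G^{(s)})` have the same number of perfect matchings: subdividing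
the edge an odd number of times always yields line graphs with equally many perfect
matchings. -/
theorem numPM_lineGraph_subdivideEdge_odd_times
    {V : Type*} [Fintype V] [DecidableEq V] (G : SimpleGraph V) [DecidableRel G.Adj]
    (hconn : G.Connected)
    (u v : V) (huv : G.Adj u v)
    (hu : 2 ≤ G.degree u) (hv : 2 ≤ G.degree v)
    (s : ℕ) (hs : 1 ≤ s) :
    numPM (subdivideEdge G u v (2 * 1 + 1)).lineGraph
      = numPM (subdivideEdge G u v (2 * s + 1)).lineGraph := by
  rw [numPM_lineGraph_subdivideEdge (by omega) huv.ne,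
    numPM_lineGraph_subdivideEdge (by omega) huv.ne]
  exact (card_partnerMap_attachPath _ _ _ 1).trans (card_partnerMap_attachPath _ _ _ s).symm
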